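/- (Example 2: necessity of interaction, impossibility part.) The tuple (p_XY, f₁, f₂, g) with f₁(x,y) = f₂(x,y) = y_x and g(x,y) = y_{1−x} is not asymptotically securely computable using non-interactive communication: there exists ε₀ > 0 such that for every n ≥ 1 and every non-interactive protocol, the correctness condition P((Z₁ⁿ, Z₂ⁿ) ≠ (Y_Xⁿ, Y_Xⁿ)) ≤ ε₀ and the secrecy condition I(M₁, M₂; Y_{X̄}ⁿ) ≤ nε₀ cannot both hold. -/

import Mathlib

open scoped BigOperators

/-- A probability mass function on a finite type, given as a real-valued function. -/
def IsPMF {Ω : Type*} [Fintype Ω] (p : Ω → ℝ) : Prop :=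
  (∀ ω, 0 ≤ p ω) ∧ ∑ ω, p ω = 1

open Classical in
/-- Probability of an event under a pmf on a finite type. -/
noncomputable def probOf {Ω : Type*} [Fintype Ω] (p : Ω → ℝ) (E : Ω → Prop) : ℝ :=
  ∑ ω, if E ω then p ω else 0

/-- Distribution (pushforward) of a random variable `A` under pmf `p`. -/
noncomputable def distOf {Ω β : Type*} [Fintype Ω] [DecidableEq β]
    (p : Ω → ℝ) (A : Ω → β) : β → ℝ :=
  fun b => ∑ ω, if A ω = b then p ω else 0

/-- Shannon entropy (in nats) of a distribution on a finite type. -/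
noncomputable def entD {β : Type*} [Fintype β] (q : β → ℝ) : ℝ :=
  -∑ b, q b * Real.log (q b)

/-- Shannon entropy H(A) of a random variable `A` under pmf `p`. -/
noncomputable def entRV {Ω β : Type*} [Fintype Ω] [Fintype β] [DecidableEq β]
    (p : Ω → ℝ) (A : Ω → β) : ℝ :=
  entD (distOf p A)

/-- Conditional Shannon entropy H(A | C). -/
noncomputable def condEnt {Ω β γ : Type*} [Fintype Ω] [Fintype β] [DecidableEq β]
    [Fintype γ] [DecidableEq γ] (p : Ω → ℝ) (A : Ω → β) (C : Ω → γ) : ℝ :=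
  entRV p (fun ω => (A ω, C ω)) - entRV p C

/-- Mutual information I(A; B). -/
noncomputable def mutInfo {Ω β γ : Type*} [Fintype Ω] [Fintype β] [DecidableEq β]
    [Fintype γ] [DecidableEq γ] (p : Ω → ℝ) (A : Ω → β) (B : Ω → γ) : ℝ :=
  entRV p A + entRV p B - entRV p (fun ω => (A ω, B ω))

/-- Conditional mutual information I(A; B | C). -/
noncomputable def condMutInfo {Ω β γ δ : Type*} [Fintype Ω] [Fintype β] [DecidableEq β]
    [Fintype γ] [DecidableEq γ] [Fintype δ] [DecidableEq δ]
    (p : Ω → ℝ) (A : Ω → β) (B : Ω → γ) (C : Ω → δ) : ℝ :=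
  entRV p (fun ω => (A ω, C ω)) + entRV p (fun ω => (B ω, C ω))
    - entRV p (fun ω => (A ω, B ω, C ω)) - entRV p C

/-- Privacy against Alice with respect to `g` of a transition kernel `k(m|x,y)`,
for the function `f` being computed. -/
def PrivAlice {𝒳 𝒴 𝒵 𝒢 ℳ : Type*} (f : 𝒳 → 𝒴 → 𝒵) (g : 𝒳 → 𝒴 → 𝒢)
    (k : 𝒳 → 𝒴 → ℳ → ℝ) : Prop :=
  ∀ x y₁ y₂, g x y₁ ≠ g x y₂ → f x y₁ = f x y₂ → ∀ m, k x y₁ m = k x y₂ m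

/-- Privacy against Bob with respect to `h` of a transition kernel `k(m|x,y)`,
for the function `f` being computed. -/
def PrivBob {𝒳 𝒴 𝒵 ℋ ℳ : Type*} (f : 𝒳 → 𝒴 → 𝒵) (h : 𝒳 → 𝒴 → ℋ)
    (k : 𝒳 → 𝒴 → ℳ → ℝ) : Prop :=
  ∀ x₁ x₂ y, h x₁ y ≠ h x₂ y → f x₁ y = f x₂ y → ∀ m, k x₁ y m = k x₂ y m

/-- `Y_Xⁿ`: the vector whose `i`-th entry is `Y₀ᵢ` if `Xᵢ = 0` and `Y₁ᵢ` if `Xᵢ = 1`. -/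
def selSame {Ω : Type*} {n : ℕ} (Xv : Ω → Fin n → Bool)
    (Yv : Ω → Fin n → Bool × Bool) : Ω → Fin n → Bool :=
  fun ω i => if Xv ω i then (Yv ω i).2 else (Yv ω i).1

/-- `Y_{X̄}ⁿ`: the vector whose `i`-th entry is `Y_{1−Xᵢ, i}`. -/
def selOpp {Ω : Type*} {n : ℕ} (Xv : Ω → Fin n → Bool)
    (Yv : Ω → Fin n → Bool × Bool) : Ω → Fin n → Bool :=
  fun ω i => if Xv ω i then (Yv ω i).1 else (Yv ω i).2

/-- The inputs `(Xⁿ, Yⁿ) = (Xⁿ, (Y₀ⁿ, Y₁ⁿ))` are `n` i.i.d. copies of three mutually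
independent uniform bits, i.e. the joint distribution is uniform on the `8^n` values. -/
def UnifIID {Ω : Type*} [Fintype Ω] {n : ℕ} (p : Ω → ℝ)
    (Xv : Ω → Fin n → Bool) (Yv : Ω → Fin n → Bool × Bool) : Prop :=
  ∀ (xv : Fin n → Bool) (yv : Fin n → Bool × Bool),
    probOf p (fun ω => Xv ω = xv ∧ Yv ω = yv) = (1 / 8 : ℝ) ^ n

/-!
Without interaction, `(Xⁿ, M₁)` and `(Yⁿ, M₂)` are independent. Alice decodes `Y_X` from her view
and `M₂`, so freezing her view at a value with `Xᵢ = c` turns her decoder into an estimator of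
`Y_{c,i}` from `M₂` alone: `M₂` reveals *both* bits of Bob. Likewise, freezing Bob's view at a value
with `Yᵢ = (0, 1)` turns his decoder into an estimator of `Xᵢ` from `M₁`. The eavesdropper
combines the estimators into one of `Y_{X̄}`, and Fano's inequality bounds the leakage from below.
-/

section GibbsInequality

open Real InformationTheory

theorem mul_klFun_div {a b : ℝ} (h : b = 0 → a = 0) :
    b * klFun (a / b) = a * (log a - log b) - (a - b) := by
  rcases eq_or_ne b 0 with rfl | hb
  · simp [h rfl]
  rcases eq_or_ne a 0 with rfl | ha
  · simp [klFun_zero]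
  rw [klFun_apply, log_div ha hb]
  field_simp
  ring

variable {ι : Type*} [Fintype ι] {P Q : ι → ℝ}

theorem sum_mul_klFun_div (hPQ : ∀ i, Q i = 0 → P i = 0) :
    ∑ i, Q i * klFun (P i / Q i)
      = ∑ i, P i * (log (P i) - log (Q i)) - (∑ i, P i - ∑ i, Q i) := by
  simp only [mul_klFun_div (hPQ _), Finset.sum_sub_distrib]

theorem mul_klFun_div_nonneg {a b : ℝ} (ha : 0 ≤ a) (hb : 0 ≤ b) : 0 ≤ b * klFun (a / b) :=
  mul_nonneg hb (klFun_nonneg (div_nonneg ha hb))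

theorem sum_mul_log_sub_log_nonneg (hP : ∀ i, 0 ≤ P i) (hQ : ∀ i, 0 ≤ Q i)
    (hPQ : ∀ i, Q i = 0 → P i = 0) (hsum : ∑ i, Q i ≤ ∑ i, P i) :
    0 ≤ ∑ i, P i * (log (P i) - log (Q i)) := by
  have hkl := Finset.sum_nonneg fun i (_ : i ∈ Finset.univ) ↦ mul_klFun_div_nonneg (hP i) (hQ i)
  rw [sum_mul_klFun_div hPQ] at hkl
  linarith

theorem eq_of_sum_mul_log_sub_log_eq_zero (hP : ∀ i, 0 ≤ P i) (hQ : ∀ i, 0 ≤ Q i)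
    (hPQ : ∀ i, Q i = 0 → P i = 0) (hsum : ∑ i, Q i ≤ ∑ i, P i)
    (h : ∑ i, P i * (log (P i) - log (Q i)) = 0) : P = Q := by
  have hnonneg : ∀ i ∈ Finset.univ, 0 ≤ Q i * klFun (P i / Q i) :=
    fun i _ ↦ mul_klFun_div_nonneg (hP i) (hQ i)
  have hzero : ∑ i, Q i * klFun (P i / Q i) = 0 := by
    refine le_antisymm ?_ (Finset.sum_nonneg hnonneg)
    rw [sum_mul_klFun_div hPQ, h]
    linarith
  ext i
  rcases mul_eq_zero.1 ((Finset.sum_eq_zero_iff_of_nonneg hnonneg).1 hzero i (Finset.mem_univ i))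
    with hQi | hkl
  · rw [hQi, hPQ i hQi]
  · exact eq_of_div_eq_one ((klFun_eq_zero_iff (div_nonneg (hP i) (hQ i))).1 hkl)

end GibbsInequality

section Distributions

variable {Ω β γ : Type*} [Fintype Ω] [DecidableEq β] [DecidableEq γ] {p : Ω → ℝ}

theorem distOf_nonneg (hp : ∀ ω, 0 ≤ p ω) (A : Ω → β) (b : β) : 0 ≤ distOf p A b :=
  Finset.sum_nonneg fun ω _ ↦ by split_ifs <;> simp [hp ω]

theorem distOf_congr {A : Ω → β} {B : Ω → γ} {b : β} {c : γ} (h : ∀ ω, A ω = b ↔ B ω = c) :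
    distOf p A b = distOf p B c := by
  simp only [distOf, h]

theorem distOf_le_distOf_comp (hp : ∀ ω, 0 ≤ p ω) (A : Ω → β) (f : β → γ) (b : β) :
    distOf p A b ≤ distOf p (fun ω ↦ f (A ω)) (f b) := by
  refine Finset.sum_le_sum fun ω _ ↦ ?_
  by_cases h : A ω = b
  · simp [h]
  · simp only [h, if_false]
    split_ifs <;> simp [hp ω]

theorem distOf_eq_zero_of_comp (hp : ∀ ω, 0 ≤ p ω) {A : Ω → β} (f : β → γ) {b : β}
    (h : distOf p (fun ω ↦ f (A ω)) (f b) = 0) : distOf p A b = 0 :=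
  le_antisymm ((distOf_le_distOf_comp hp A f b).trans_eq h) (distOf_nonneg hp A b)

theorem sum_distOf_mul [Fintype β] (p : Ω → ℝ) (A : Ω → β) (g : β → ℝ) :
    ∑ b, distOf p A b * g b = ∑ ω, p ω * g (A ω) := by
  simp only [distOf, Finset.sum_mul]
  rw [Finset.sum_comm]
  simp [ite_mul]

theorem sum_distOf [Fintype β] (p : Ω → ℝ) (A : Ω → β) : ∑ b, distOf p A b = ∑ ω, p ω := by
  simpa using sum_distOf_mul p A fun _ ↦ 1

theorem sum_distOf_prodMk_left [Fintype β] (p : Ω → ℝ) (A : Ω → β) (C : Ω → γ) (c : γ) :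
    ∑ b, distOf p (fun ω ↦ (A ω, C ω)) (b, c) = distOf p C c := by
  simp only [distOf]
  rw [Finset.sum_comm]
  refine Finset.sum_congr rfl fun ω _ ↦ ?_
  by_cases h : C ω = c <;> simp [h]

theorem probOf_mono (hp : ∀ ω, 0 ≤ p ω) {E F : Ω → Prop} (h : ∀ ω, E ω → F ω) :
    probOf p E ≤ probOf p F := by
  refine Finset.sum_le_sum fun ω _ ↦ ?_
  by_cases hE : E ω
  · simp [hE, h ω hE]
  · simp only [hE, if_false]
    split_ifs <;> simp [hp ω]

theorem probOf_nonneg (hp : ∀ ω, 0 ≤ p ω) (E : Ω → Prop) : 0 ≤ probOf p E :=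
  Finset.sum_nonneg fun ω _ ↦ by split_ifs <;> simp [hp ω]

theorem probOf_or_le (hp : ∀ ω, 0 ≤ p ω) (E F : Ω → Prop) :
    probOf p (fun ω ↦ E ω ∨ F ω) ≤ probOf p E + probOf p F := by
  simp only [probOf, ← Finset.sum_add_distrib]
  refine Finset.sum_le_sum fun ω _ ↦ ?_
  by_cases hE : E ω <;> by_cases hF : F ω <;> simp [hE, hF, hp ω]

theorem sum_probOf_apply_ne_le {ι α : Type*} [Fintype ι] (hp : ∀ ω, 0 ≤ p ω) {Z W : Ω → ι → α}
    {E : Ω → Prop} (h : ∀ ω, Z ω ≠ W ω → E ω) :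
    ∑ i, probOf p (fun ω ↦ Z ω i ≠ W ω i) ≤ Fintype.card ι * probOf p E := by
  simpa using Finset.sum_le_card_nsmul Finset.univ _ _ fun i _ ↦
    probOf_mono hp fun ω hne ↦ h ω (ne_of_apply_ne (· i) hne)

theorem distOf_eq_probOf (A : Ω → β) (b : β) : distOf p A b = probOf p fun ω ↦ A ω = b := by
  unfold distOf probOf
  congr!

theorem probOf_eq_sum_mul_ite (E : Ω → Prop) [DecidablePred E] :
    probOf p E = ∑ ω, p ω * if E ω then 1 else 0 := by
  simp only [probOf, mul_ite, mul_one, mul_zero]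
  congr!

end Distributions

section Independence

variable {Ω β γ δ ε : Type*} [Fintype Ω] [DecidableEq β] [DecidableEq γ] [DecidableEq δ]
  [DecidableEq ε]

/-- Independence of the finite-valued random variables `A` and `B` under `p`: the joint
distribution is the product of the marginals. -/
def IndepRV (p : Ω → ℝ) (A : Ω → β) (B : Ω → γ) : Prop :=
  ∀ a b, distOf p (fun ω ↦ (A ω, B ω)) (a, b) = distOf p A a * distOf p B b

/-- Conditional independence of `A` and `B` given `C` under `p`, multiplied out as
`P(a, b, c) P(c) = P(a, c) P(b, c)` so that no conditional probability given a null event occurs. -/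
def CondIndepRV (p : Ω → ℝ) (A : Ω → β) (B : Ω → γ) (C : Ω → δ) : Prop :=
  ∀ a b c, distOf p (fun ω ↦ (A ω, B ω, C ω)) (a, b, c) * distOf p C c
    = distOf p (fun ω ↦ (A ω, C ω)) (a, c) * distOf p (fun ω ↦ (B ω, C ω)) (b, c)

variable {p : Ω → ℝ} {A : Ω → β} {B : Ω → γ} {C : Ω → δ} {D : Ω → ε}

theorem IndepRV.symm (h : IndepRV p A B) : IndepRV p B A := fun b a ↦ by
  rw [mul_comm, ← h a b]
  exact distOf_congr (by grind)

theorem CondIndepRV.fst_right [Finite ε] (h : CondIndepRV p A (fun ω ↦ (B ω, D ω)) C) :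
    CondIndepRV p A B C := fun a b c ↦ by
  have := Fintype.ofFinite ε
  rw [← sum_distOf_prodMk_left p D fun ω ↦ (A ω, B ω, C ω),
    ← sum_distOf_prodMk_left p D fun ω ↦ (B ω, C ω), Finset.sum_mul, Finset.mul_sum]
  refine Finset.sum_congr rfl fun d _ ↦ ?_
  convert h a (b, d) c using 2 <;> exact distOf_congr (by grind)

/-- The contraction property of conditional independence. -/
theorem CondIndepRV.indepRV_prodMk (hp : ∀ ω, 0 ≤ p ω) (h : CondIndepRV p A B C)
    (hCB : IndepRV p C B) : IndepRV p (fun ω ↦ (C ω, A ω)) B := by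
  rintro ⟨c, a⟩ b
  by_cases hc : distOf p C c = 0
  · rw [distOf_eq_zero_of_comp hp (fun t : (δ × β) × γ ↦ t.1.1) hc,
      distOf_eq_zero_of_comp hp (Prod.fst : δ × β → δ) hc, zero_mul]
  · apply mul_right_cancel₀ hc
    calc distOf p (fun ω ↦ ((C ω, A ω), B ω)) ((c, a), b) * distOf p C c
        = distOf p (fun ω ↦ (A ω, B ω, C ω)) (a, b, c) * distOf p C c := by
          congr 1; exact distOf_congr (by grind)
      _ = distOf p (fun ω ↦ (A ω, C ω)) (a, c) * distOf p (fun ω ↦ (B ω, C ω)) (b, c) := h a b c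
      _ = distOf p (fun ω ↦ (C ω, A ω)) (c, a) * distOf p (fun ω ↦ (C ω, B ω)) (c, b) := by
          congr 1 <;> exact distOf_congr (by grind)
      _ = distOf p (fun ω ↦ (C ω, A ω)) (c, a) * distOf p B b * distOf p C c := by
          rw [hCB c b]; ring

theorem IndepRV.prodMk_prodMk [Finite ε] (hp : ∀ ω, 0 ≤ p ω) (h : IndepRV p A B)
    (hD : CondIndepRV p D (fun ω ↦ (B ω, C ω)) A) (hC : CondIndepRV p C (fun ω ↦ (A ω, D ω)) B) :
    IndepRV p (fun ω ↦ (A ω, D ω)) (fun ω ↦ (B ω, C ω)) :=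
  hD.indepRV_prodMk hp (hC.fst_right.indepRV_prodMk hp h.symm).symm

theorem IndepRV.probOf_eq_sum [Fintype β] [Finite γ] (h : IndepRV p A B) (E : β → γ → Prop) :
    probOf p (fun ω ↦ E (A ω) (B ω)) = ∑ a, distOf p A a * probOf p fun ω ↦ E a (B ω) := by
  classical
  have := Fintype.ofFinite γ
  simp only [probOf_eq_sum_mul_ite]
  rw [← sum_distOf_mul p (fun ω ↦ (A ω, B ω)) fun t ↦ if E t.1 t.2 then 1 else 0,
    Fintype.sum_prod_type]
  refine Finset.sum_congr rfl fun a _ ↦ ?_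
  simp only [h a, mul_assoc, ← Finset.mul_sum]
  rw [sum_distOf_mul p B fun b ↦ if E a b then 1 else 0]

theorem IndepRV.exists_probOf_mul_le [Finite β] [Finite γ] (hp : ∀ ω, 0 ≤ p ω)
    (h : IndepRV p A B) {S : β → Prop} (hS : 0 < probOf p fun ω ↦ S (A ω)) (E : β → γ → Prop) :
    ∃ a, S a ∧ (probOf p fun ω ↦ S (A ω)) * (probOf p fun ω ↦ E a (B ω))
      ≤ probOf p fun ω ↦ E (A ω) (B ω) := by
  classical
  have := Fintype.ofFinite β
  have hSsum : (probOf p fun ω ↦ S (A ω)) = ∑ a with S a, distOf p A a := by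
    rw [probOf_eq_sum_mul_ite, ← sum_distOf_mul p A fun a ↦ if S a then 1 else 0]
    simp [Finset.sum_filter]
  obtain ⟨a, ha, hmin⟩ := Finset.exists_min_image {a | S a} (fun a ↦ probOf p fun ω ↦ E a (B ω))
    (Finset.nonempty_of_sum_ne_zero (hSsum ▸ hS.ne'))
  refine ⟨a, (Finset.mem_filter.1 ha).2, ?_⟩
  calc (probOf p fun ω ↦ S (A ω)) * (probOf p fun ω ↦ E a (B ω))
      = ∑ a' with S a', distOf p A a' * (probOf p fun ω ↦ E a (B ω)) := by
        rw [hSsum, Finset.sum_mul]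
    _ ≤ ∑ a' with S a', distOf p A a' * (probOf p fun ω ↦ E a' (B ω)) :=
        Finset.sum_le_sum fun a' ha' ↦
          mul_le_mul_of_nonneg_left (hmin a' ha') (distOf_nonneg hp A a')
    _ ≤ ∑ a', distOf p A a' * (probOf p fun ω ↦ E a' (B ω)) :=
        Finset.sum_le_univ_sum_of_nonneg fun a' ↦
          mul_nonneg (distOf_nonneg hp A a') (probOf_nonneg hp _)
    _ = probOf p fun ω ↦ E (A ω) (B ω) := (h.probOf_eq_sum E).symm

end Independence

section Information

open Real

variable {Ω β γ δ : Type*} [Fintype Ω] [DecidableEq β] [DecidableEq γ] [DecidableEq δ] {p : Ω → ℝ}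

/-- The distribution with the same `(A, C)`- and `(B, C)`-marginals as `(A, B, C)` that makes `A`
and `B` conditionally independent given `C`; it vanishes where `P(C = c) = 0`, as `0 / 0 = 0`. -/
noncomputable def condProdDist (p : Ω → ℝ) (A : Ω → β) (B : Ω → γ) (C : Ω → δ) : β × γ × δ → ℝ :=
  fun t ↦ distOf p (fun ω ↦ (A ω, C ω)) (t.1, t.2.2) * distOf p (fun ω ↦ (B ω, C ω)) t.2
    / distOf p C t.2.2

variable {A : Ω → β} {B : Ω → γ} {C : Ω → δ}

theorem condProdDist_nonneg (hp : ∀ ω, 0 ≤ p ω) (t : β × γ × δ) : 0 ≤ condProdDist p A B C t :=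
  div_nonneg (mul_nonneg (distOf_nonneg hp _ _) (distOf_nonneg hp _ _)) (distOf_nonneg hp _ _)

theorem distOf_eq_zero_of_condProdDist (hp : ∀ ω, 0 ≤ p ω) {t : β × γ × δ}
    (ht : condProdDist p A B C t = 0) : distOf p (fun ω ↦ (A ω, B ω, C ω)) t = 0 := by
  rcases div_eq_zero_iff.1 ht with h | hC
  · rcases mul_eq_zero.1 h with hAC | hBC
    · exact distOf_eq_zero_of_comp hp (fun t : β × γ × δ ↦ (t.1, t.2.2)) hAC
    · exact distOf_eq_zero_of_comp hp (Prod.snd : β × γ × δ → γ × δ) hBC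
  · exact distOf_eq_zero_of_comp hp (fun t : β × γ × δ ↦ t.2.2) hC

variable [Fintype β] [Fintype γ]

theorem entRV_comp (A : Ω → β) (f : β → γ) :
    entRV p (fun ω ↦ f (A ω))
      = -∑ a, distOf p A a * log (distOf p (fun ω ↦ f (A ω)) (f a)) := by
  rw [sum_distOf_mul p A fun a ↦ log (distOf p (fun ω ↦ f (A ω)) (f a)), entRV, entD,
    sum_distOf_mul p _ fun c ↦ log (distOf p (fun ω ↦ f (A ω)) c)]

variable [Fintype δ]

theorem sum_condProdDist : ∑ t, condProdDist p A B C t = ∑ ω, p ω := by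
  calc ∑ t, condProdDist p A B C t
      = ∑ a, ∑ c, ∑ b, condProdDist p A B C (a, b, c) := by
        simp only [Fintype.sum_prod_type, Finset.sum_comm (γ := γ)]
    _ = ∑ c, ∑ a, ∑ b, condProdDist p A B C (a, b, c) := Finset.sum_comm
    _ = ∑ c, distOf p C c * distOf p C c / distOf p C c := by
        simp only [condProdDist, ← Finset.sum_div, ← Finset.mul_sum, ← Finset.sum_mul,
          sum_distOf_prodMk_left]
    _ = ∑ ω, p ω := by simp only [mul_self_div_self, sum_distOf]

theorem condMutInfo_eq_sum (hp : ∀ ω, 0 ≤ p ω) :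
    condMutInfo p A B C = ∑ t, distOf p (fun ω ↦ (A ω, B ω, C ω)) t *
      (log (distOf p (fun ω ↦ (A ω, B ω, C ω)) t) - log (condProdDist p A B C t)) := by
  set T : Ω → β × γ × δ := fun ω ↦ (A ω, B ω, C ω)
  have hsplit : ∀ t, distOf p T t * (log (distOf p T t) - log (condProdDist p A B C t))
      = distOf p T t * log (distOf p T t) + distOf p T t * log (distOf p C t.2.2)
        - distOf p T t * log (distOf p (fun ω ↦ (A ω, C ω)) (t.1, t.2.2))
        - distOf p T t * log (distOf p (fun ω ↦ (B ω, C ω)) t.2) := fun t ↦ by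
    rcases eq_or_ne (distOf p T t) 0 with ht | ht
    · simp [ht]
    have hAC := mt (distOf_eq_zero_of_comp hp (A := T) fun t ↦ (t.1, t.2.2)) ht
    have hBC := mt (distOf_eq_zero_of_comp hp (A := T) fun t ↦ t.2) ht
    have hC := mt (distOf_eq_zero_of_comp hp (A := T) fun t ↦ t.2.2) ht
    rw [condProdDist, log_div (mul_ne_zero hAC hBC) hC, log_mul hAC hBC]
    ring
  simp only [hsplit, Finset.sum_sub_distrib, Finset.sum_add_distrib]
  rw [condMutInfo, entRV_comp T fun t ↦ (t.1, t.2.2), entRV_comp T fun t ↦ t.2,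
    entRV_comp T fun t ↦ t, entRV_comp T fun t ↦ t.2.2]
  ring

theorem CondIndepRV.of_condMutInfo_eq_zero (hp : ∀ ω, 0 ≤ p ω) (h : condMutInfo p A B C = 0) :
    CondIndepRV p A B C := fun a b c ↦ by
  have hlaw : distOf p (fun ω ↦ (A ω, B ω, C ω)) = condProdDist p A B C :=
    eq_of_sum_mul_log_sub_log_eq_zero (distOf_nonneg hp _) (condProdDist_nonneg hp)
      (fun _ ↦ distOf_eq_zero_of_condProdDist hp)
      (by rw [sum_condProdDist, sum_distOf]) ((condMutInfo_eq_sum hp).symm.trans h)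
  rw [hlaw]
  refine div_mul_cancel_of_imp fun hC ↦ ?_
  rw [distOf_eq_zero_of_comp hp (Prod.snd : β × δ → δ) hC, zero_mul]

/-- The variational lower bound on mutual information, with `q a` as a guess of the law of `B`
given `A = a`. -/
theorem entRV_add_sum_mul_log_le_mutInfo (hp : ∀ ω, 0 ≤ p ω) {q : β → γ → ℝ}
    (hq : ∀ a b, 0 < q a b) (hsum : ∀ a, ∑ b, q a b = 1) :
    entRV p B + ∑ ω, p ω * log (q (A ω) (B ω)) ≤ mutInfo p A B := by
  set T : Ω → β × γ := fun ω ↦ (A ω, B ω)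
  have hgibbs :
      0 ≤ ∑ t, distOf p T t * (log (distOf p T t) - log (distOf p A t.1 * q t.1 t.2)) := by
    refine sum_mul_log_sub_log_nonneg (distOf_nonneg hp T)
      (fun t ↦ mul_nonneg (distOf_nonneg hp A _) (hq _ _).le) (fun t ht ↦ ?_) (le_of_eq ?_)
    · exact distOf_eq_zero_of_comp hp Prod.fst
        ((mul_eq_zero_iff_right (hq _ _).ne').1 ht)
    · simp only [Fintype.sum_prod_type, ← Finset.mul_sum, hsum, mul_one, sum_distOf]
  have hsplit : ∀ t, distOf p T t * (log (distOf p T t) - log (distOf p A t.1 * q t.1 t.2))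
      = distOf p T t * log (distOf p T t) - distOf p T t * log (distOf p A t.1)
        - distOf p T t * log (q t.1 t.2) := fun t ↦ by
    rcases eq_or_ne (distOf p T t) 0 with ht | ht
    · simp [ht]
    rw [log_mul (mt (distOf_eq_zero_of_comp hp (A := T) Prod.fst) ht) (hq _ _).ne']
    ring
  simp only [hsplit, Finset.sum_sub_distrib] at hgibbs
  rw [mutInfo, entRV_comp T Prod.fst, entRV_comp T fun t ↦ t,
    ← sum_distOf_mul p T fun t ↦ log (q t.1 t.2)]
  linarith

end Information

section Uniform

variable {Ω β γ : Type*} [Fintype Ω] [Fintype β] [DecidableEq β] [Fintype γ] [DecidableEq γ]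
  {p : Ω → ℝ} {A : Ω → β} {B : Ω → γ}

/-- The random variable `A` is uniformly distributed on its finite codomain under `p`. -/
def UniformRV (p : Ω → ℝ) (A : Ω → β) : Prop :=
  ∀ a, distOf p A a = (Fintype.card β : ℝ)⁻¹

theorem UniformRV.equiv (h : UniformRV p A) (e : β ≃ γ) : UniformRV p fun ω ↦ e (A ω) := fun c ↦ by
  rw [← Fintype.card_congr e, ← h (e.symm c)]
  exact distOf_congr fun ω ↦ e.eq_symm_apply.symm

theorem UniformRV.snd [Nonempty β] (h : UniformRV p fun ω ↦ (A ω, B ω)) : UniformRV p B :=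
  fun c ↦ by
    rw [← sum_distOf_prodMk_left p A B c, Finset.sum_congr rfl fun b _ ↦ h (b, c)]
    simp [mul_comm (Fintype.card γ : ℝ)⁻¹]

theorem UniformRV.fst [Nonempty γ] (h : UniformRV p fun ω ↦ (A ω, B ω)) : UniformRV p A :=
  (h.equiv (Equiv.prodComm β γ)).snd

theorem UniformRV.indepRV [Nonempty β] [Nonempty γ] (h : UniformRV p fun ω ↦ (A ω, B ω)) :
    IndepRV p A B := fun a b ↦ by
  rw [h (a, b), h.fst a, h.snd b, Fintype.card_prod, Nat.cast_mul, mul_inv]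

theorem UniformRV.apply {ι : Type*} [Fintype ι] [DecidableEq ι] [Nonempty β] {W : Ω → ι → β}
    (h : UniformRV p W) (i : ι) : UniformRV p fun ω ↦ W ω i :=
  (h.equiv (Equiv.funSplitAt i β)).fst

theorem UniformRV.entRV_eq_log_card (hp : IsPMF p) (h : UniformRV p A) :
    entRV p A = Real.log (Fintype.card β) := by
  rw [entRV, entD, sum_distOf_mul p A fun b ↦ Real.log (distOf p A b)]
  simp only [h _, ← Finset.sum_mul, hp.2, Real.log_inv, one_mul, neg_neg]

end Uniform

section Fano

open Real

variable {Ω β ι : Type*} [Fintype Ω] [Fintype β] [DecidableEq β] [Fintype ι]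
  {p : Ω → ℝ} {A : Ω → β} {W : Ω → ι → Bool}

/-- The law of a bit string obtained by flipping each bit of `v` independently with
probability `δ`. -/
def bitFlipDist (δ : ℝ) (v w : ι → Bool) : ℝ :=
  ∏ i, if v i ≠ w i then δ else 1 - δ

theorem bitFlipDist_pos {δ : ℝ} (h0 : 0 < δ) (h1 : δ < 1) (v w : ι → Bool) :
    0 < bitFlipDist δ v w :=
  Finset.prod_pos fun i _ ↦ by split_ifs <;> linarith

theorem sum_bitFlipDist [DecidableEq ι] (δ : ℝ) (v : ι → Bool) : ∑ w, bitFlipDist δ v w = 1 := by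
  refine (Fintype.prod_sum fun i b ↦ if v i ≠ b then δ else 1 - δ).symm.trans ?_
  refine Finset.prod_eq_one fun i _ ↦ ?_
  cases v i <;> simp

theorem log_bitFlipDist {δ : ℝ} (h0 : 0 < δ) (h1 : δ < 1) (v w : ι → Bool) :
    log (bitFlipDist δ v w) = Fintype.card ι * log (1 - δ)
      - (∑ i, if v i ≠ w i then 1 else 0) * (log (1 - δ) - log δ) := by
  rw [bitFlipDist, log_prod fun i _ ↦ by split_ifs <;> linarith, Finset.sum_mul,
    ← nsmul_eq_mul, ← Finset.card_univ, ← Finset.sum_const, ← Finset.sum_sub_distrib]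
  refine Finset.sum_congr rfl fun i _ ↦ ?_
  split_ifs <;> ring

theorem card_mul_log_two_sub_binEntropy_le_mutInfo [DecidableEq ι] (hp : IsPMF p)
    (hW : UniformRV p W) (est : β → ι → Bool) {δ : ℝ} (h0 : 0 < δ) (h1 : δ ≤ 1 / 2)
    (hest : ∑ i, probOf p (fun ω ↦ est (A ω) i ≠ W ω i) ≤ Fintype.card ι * δ) :
    Fintype.card ι * (log 2 - binEntropy δ) ≤ mutInfo p A W := by
  have hδ : δ < 1 := by linarith
  have hent : entRV p W = Fintype.card ι * log 2 := by
    rw [hW.entRV_eq_log_card hp]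
    simp
  have herr : ∑ ω, p ω * ∑ i, (if est (A ω) i ≠ W ω i then 1 else 0)
      = ∑ i, probOf p fun ω ↦ est (A ω) i ≠ W ω i := by
    simp only [probOf_eq_sum_mul_ite, Finset.mul_sum]
    exact Finset.sum_comm
  have hcross : ∑ ω, p ω * log (bitFlipDist δ (est (A ω)) (W ω))
      = Fintype.card ι * log (1 - δ)
        - (∑ i, probOf p fun ω ↦ est (A ω) i ≠ W ω i) * (log (1 - δ) - log δ) := by
    simp only [log_bitFlipDist h0 hδ, mul_sub (p _), ← mul_assoc (p _), Finset.sum_sub_distrib,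
      ← Finset.sum_mul, hp.2, one_mul, herr]
  have hlog : 0 ≤ log (1 - δ) - log δ := sub_nonneg.2 (log_le_log h0 (by linarith))
  calc Fintype.card ι * (log 2 - binEntropy δ)
      = Fintype.card ι * log 2
        + (Fintype.card ι * log (1 - δ) - Fintype.card ι * δ * (log (1 - δ) - log δ)) := by
        rw [binEntropy, log_inv, log_inv]; ring
    _ ≤ entRV p W + ∑ ω, p ω * log (bitFlipDist δ (est (A ω)) (W ω)) := by
        rw [hent, hcross]; gcongr
    _ ≤ mutInfo p A W := entRV_add_sum_mul_log_le_mutInfo hp.1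
        (fun a ↦ bitFlipDist_pos h0 hδ (est a)) fun a ↦ sum_bitFlipDist δ (est a)

end Fano

section Inputs

variable {Ω : Type*} [Fintype Ω] {n : ℕ} {p : Ω → ℝ} {Xv : Ω → Fin n → Bool}
  {Yv : Ω → Fin n → Bool × Bool}

theorem UnifIID.uniformRV (h : UnifIID p Xv Yv) : UniformRV p fun ω ↦ (Xv ω, Yv ω) := by
  rintro ⟨x, y⟩
  simp only [distOf_eq_probOf, Prod.mk.injEq, h x y]
  simp [← mul_pow]

theorem UnifIID.uniformRV_selOpp (h : UnifIID p Xv Yv) : UniformRV p (selOpp Xv Yv) := by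
  let sortBits (x : Fin n → Bool) : (Fin n → Bool × Bool) ≃ (Fin n → Bool × Bool) :=
    Equiv.piCongrRight fun i ↦ if x i then Equiv.prodComm Bool Bool else Equiv.refl _
  have hsort : ∀ ω, sortBits (Xv ω) (Yv ω) = fun i ↦ (selSame Xv Yv ω i, selOpp Xv Yv ω i) := by
    intro ω
    funext i
    cases hx : Xv ω i <;> simp [sortBits, selSame, selOpp, hx, Prod.swap]
  have hpair : UniformRV p fun ω ↦ sortBits (Xv ω) (Yv ω) :=
    (h.uniformRV.equiv (Equiv.prodShear (Equiv.refl _) sortBits)).snd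
  simp only [hsort] at hpair
  exact (hpair.equiv (Equiv.arrowProdEquivProdArrow (Fin n) _ _)).snd

end Inputs

section Estimators

/-- The bit `y_c` of the pair `y = (y₀, y₁)`. -/
def pick (c : Bool) (y : Bool × Bool) : Bool :=
  if c then y.2 else y.1

theorem selSame_eq_pick {Ω : Type*} {n : ℕ} (Xv : Ω → Fin n → Bool) (Yv : Ω → Fin n → Bool × Bool)
    (ω : Ω) (i : Fin n) : selSame Xv Yv ω i = pick (Xv ω i) (Yv ω i) :=
  rfl

theorem selOpp_eq_pick_not {Ω : Type*} {n : ℕ} (Xv : Ω → Fin n → Bool)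
    (Yv : Ω → Fin n → Bool × Bool) (ω : Ω) (i : Fin n) :
    selOpp Xv Yv ω i = pick (!Xv ω i) (Yv ω i) := by
  cases hx : Xv ω i <;> simp [selOpp, pick, hx]

variable {Ω α β μ ν : Type*} [Fintype Ω] [Finite α] [DecidableEq α] [Finite β] [DecidableEq β]
  [Finite μ] [DecidableEq μ] [Finite ν] [DecidableEq ν] {p : Ω → ℝ}
  {X : Ω → α} {Y : Ω → β} {M₁ : Ω → μ} {M₂ : Ω → ν}

theorem exists_estimator_pick (hp : ∀ ω, 0 ≤ p ω)
    (h : IndepRV p (fun ω ↦ (X ω, M₁ ω)) fun ω ↦ (Y ω, M₂ ω)) {s : α → Bool}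
    (hs : UniformRV p fun ω ↦ s (X ω)) (t : β → Bool × Bool) (φ : α × μ × ν → Bool) (c : Bool) :
    ∃ f : ν → Bool, (probOf p fun ω ↦ f (M₂ ω) ≠ pick c (t (Y ω)))
      ≤ 2 * probOf p fun ω ↦ φ (X ω, M₁ ω, M₂ ω) ≠ pick (s (X ω)) (t (Y ω)) := by
  have hc : (probOf p fun ω ↦ s (X ω) = c) = 1 / 2 := by
    rw [← distOf_eq_probOf, hs c]
    simp
  obtain ⟨⟨x, m⟩, rfl, hle⟩ := h.exists_probOf_mul_le hp (S := fun a ↦ s a.1 = c)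
    (by rw [hc]; norm_num) fun a b ↦ φ (a.1, a.2, b.2) ≠ pick (s a.1) (t b.1)
  exact ⟨fun m₂ ↦ φ (x, m, m₂), by rw [hc] at hle; linarith⟩

/-- At `y = (0, 1)` the bit `y_x` is `x` itself. -/
theorem exists_estimator_selector (hp : ∀ ω, 0 ≤ p ω)
    (h : IndepRV p (fun ω ↦ (X ω, M₁ ω)) fun ω ↦ (Y ω, M₂ ω)) (s : α → Bool)
    {t : β → Bool × Bool} (ht : UniformRV p fun ω ↦ t (Y ω)) (φ : β × μ × ν → Bool) :
    ∃ f : μ → Bool, (probOf p fun ω ↦ f (M₁ ω) ≠ s (X ω))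
      ≤ 4 * probOf p fun ω ↦ φ (Y ω, M₁ ω, M₂ ω) ≠ pick (s (X ω)) (t (Y ω)) := by
  have hy : (probOf p fun ω ↦ t (Y ω) = (false, true)) = 1 / 4 := by
    rw [← distOf_eq_probOf, ht]
    norm_num
  have hpick : ∀ c, pick c (false, true) = c := by decide
  obtain ⟨⟨y, m⟩, hty, hle⟩ := h.symm.exists_probOf_mul_le hp (S := fun b ↦ t b.1 = (false, true))
    (by rw [hy]; norm_num) fun b a ↦ φ (b.1, a.2, b.2) ≠ pick (s a.1) (t b.1)
  simp only [hy, show t y = (false, true) from hty, hpick] at hle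
  exact ⟨fun m₁ ↦ φ (y, m₁, m), by linarith⟩

theorem exists_estimator_pick_not (hp : ∀ ω, 0 ≤ p ω)
    (h : IndepRV p (fun ω ↦ (X ω, M₁ ω)) fun ω ↦ (Y ω, M₂ ω)) {s : α → Bool}
    {t : β → Bool × Bool} (hs : UniformRV p fun ω ↦ s (X ω)) (ht : UniformRV p fun ω ↦ t (Y ω))
    (φ₁ : α × μ × ν → Bool) (φ₂ : β × μ × ν → Bool) :
    ∃ f : μ × ν → Bool, (probOf p fun ω ↦ f (M₁ ω, M₂ ω) ≠ pick (!s (X ω)) (t (Y ω)))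
      ≤ 4 * ((probOf p fun ω ↦ φ₁ (X ω, M₁ ω, M₂ ω) ≠ pick (s (X ω)) (t (Y ω)))
        + probOf p fun ω ↦ φ₂ (Y ω, M₁ ω, M₂ ω) ≠ pick (s (X ω)) (t (Y ω))) := by
  choose fY hfY using exists_estimator_pick hp h hs t φ₁
  obtain ⟨fX, hfX⟩ := exists_estimator_selector hp h s ht φ₂
  refine ⟨fun m ↦ fY (!fX m.1) m.2, ?_⟩
  have hunion : (probOf p fun ω ↦ fY (!fX (M₁ ω)) (M₂ ω) ≠ pick (!s (X ω)) (t (Y ω)))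
      ≤ (probOf p fun ω ↦ fX (M₁ ω) ≠ s (X ω))
        + ((probOf p fun ω ↦ fY true (M₂ ω) ≠ pick true (t (Y ω)))
          + probOf p fun ω ↦ fY false (M₂ ω) ≠ pick false (t (Y ω))) := by
    refine le_trans (probOf_mono hp fun ω herr ↦ ?_) ((probOf_or_le hp _ _).trans
      (add_le_add_right (probOf_or_le hp _ _) _))
    cases hs : s (X ω) <;> cases hf : fX (M₁ ω) <;> simp_all
  linarith [hfY true, hfY false]

end Estimators

open Real in
theorem interaction_necessary_general {n : ℕ} {Ω 𝓜₁ 𝓜₂ : Type*} [Fintype Ω] [Fintype 𝓜₁]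
    [DecidableEq 𝓜₁] [Fintype 𝓜₂] [DecidableEq 𝓜₂] {p : Ω → ℝ} {Xv : Ω → Fin n → Bool}
    {Yv : Ω → Fin n → Bool × Bool} {M₁ : Ω → 𝓜₁} {M₂ : Ω → 𝓜₂} {Z₁ Z₂ : Ω → Fin n → Bool}
    (hp : IsPMF p) (hXY : UnifIID p Xv Yv)
    (hM₁ : condMutInfo p M₁ (fun ω ↦ (Yv ω, M₂ ω)) Xv = 0)
    (hM₂ : condMutInfo p M₂ (fun ω ↦ (Xv ω, M₁ ω)) Yv = 0)
    (hZ₁ : ∃ φ₁ : (Fin n → Bool) × 𝓜₁ × 𝓜₂ → Fin n → Bool, ∀ ω, Z₁ ω = φ₁ (Xv ω, M₁ ω, M₂ ω))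
    (hZ₂ : ∃ φ₂ : (Fin n → Bool × Bool) × 𝓜₁ × 𝓜₂ → Fin n → Bool,
      ∀ ω, Z₂ ω = φ₂ (Yv ω, M₁ ω, M₂ ω))
    {ε : ℝ} (hε0 : 0 < ε) (hε : ε ≤ 1 / 16)
    (herr₁ : ∑ i, probOf p (fun ω ↦ Z₁ ω i ≠ selSame Xv Yv ω i) ≤ n * ε)
    (herr₂ : ∑ i, probOf p (fun ω ↦ Z₂ ω i ≠ selSame Xv Yv ω i) ≤ n * ε) :
    n * (log 2 - binEntropy (8 * ε)) ≤ mutInfo p (fun ω ↦ (M₁ ω, M₂ ω)) (selOpp Xv Yv) := by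
  obtain ⟨φ₁, hφ₁⟩ := hZ₁
  obtain ⟨φ₂, hφ₂⟩ := hZ₂
  simp only [hφ₁] at herr₁
  simp only [hφ₂] at herr₂
  have hviews : IndepRV p (fun ω ↦ (Xv ω, M₁ ω)) fun ω ↦ (Yv ω, M₂ ω) :=
    hXY.uniformRV.indepRV.prodMk_prodMk hp.1 (.of_condMutInfo_eq_zero hp.1 hM₁)
      (.of_condMutInfo_eq_zero hp.1 hM₂)
  choose est hest using fun i ↦ exists_estimator_pick_not hp.1 hviews (s := (· i)) (t := (· i))
    (hXY.uniformRV.fst.apply i) (hXY.uniformRV.snd.apply i) (φ₁ · i) (φ₂ · i)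
  have hsum : ∑ i, probOf p (fun ω ↦ est i (M₁ ω, M₂ ω) ≠ selOpp Xv Yv ω i) ≤ n * (8 * ε) := by
    calc ∑ i, probOf p (fun ω ↦ est i (M₁ ω, M₂ ω) ≠ selOpp Xv Yv ω i)
        ≤ ∑ i, 4 * (probOf p (fun ω ↦ φ₁ (Xv ω, M₁ ω, M₂ ω) i ≠ selSame Xv Yv ω i)
          + probOf p fun ω ↦ φ₂ (Yv ω, M₁ ω, M₂ ω) i ≠ selSame Xv Yv ω i) :=
          Finset.sum_le_sum fun i _ ↦ by
            simpa only [selSame_eq_pick, selOpp_eq_pick_not] using hest i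
      _ ≤ n * (8 * ε) := by
          rw [← Finset.mul_sum, Finset.sum_add_distrib]
          linarith
  simpa using card_mul_log_two_sub_binEntropy_le_mutInfo (A := fun ω ↦ (M₁ ω, M₂ ω)) hp
    hXY.uniformRV_selOpp (fun m i ↦ est i m) (δ := 8 * ε) (by linarith) (by linarith)
    (by simpa using hsum)

theorem one_div_64_lt_log_two_sub_binEntropy : 1 / 64 < Real.log 2 - Real.binEntropy (1 / 8) := by
  have hlog8 : Real.log 8 = 3 * Real.log 2 := by
    rw [show (8 : ℝ) = 2 ^ 3 by norm_num, Real.log_pow]; norm_num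
  have hlog : Real.log (8 / 7) ≤ 1 / 7 :=
    (Real.log_le_sub_one_of_pos (by norm_num)).trans (by norm_num)
  have hbin : Real.binEntropy (1 / 8) = 1 / 8 * Real.log 8 + 7 / 8 * Real.log (8 / 7) := by
    rw [Real.binEntropy]; norm_num
  linarith [Real.log_two_gt_d9]

/-- **Example 2, impossibility part: necessity of interaction.** The tuple with
`f₁(x,y) = f₂(x,y) = y_x` and `g(x,y) = y_{1−x}` is not asymptotically securely
computable using non-interactive communication: there is `ε₀ > 0` such that for every
`n ≥ 1` and every non-interactive protocol (messages `M₁`, a randomized function of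
`Xⁿ`, and `M₂`, a randomized function of `Yⁿ`; outputs `Z₁ⁿ` a function of
`(Xⁿ, M₁, M₂)` and `Z₂ⁿ` a function of `(Yⁿ, M₁, M₂)`), correctness
`P((Z₁ⁿ, Z₂ⁿ) ≠ (Y_Xⁿ, Y_Xⁿ)) ≤ ε₀` and secrecy `I(M₁, M₂; Y_{X̄}ⁿ) ≤ n ε₀`
cannot both hold. -/
theorem interaction_necessary :
    ∃ ε₀ : ℝ, 0 < ε₀ ∧
      ∀ (n : ℕ), 1 ≤ n →
      ∀ (Ω 𝓜₁ 𝓜₂ : Type) [Fintype Ω] [Fintype 𝓜₁] [DecidableEq 𝓜₁]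
        [Fintype 𝓜₂] [DecidableEq 𝓜₂],
      ∀ (p : Ω → ℝ) (Xv : Ω → Fin n → Bool) (Yv : Ω → Fin n → Bool × Bool)
        (M₁ : Ω → 𝓜₁) (M₂ : Ω → 𝓜₂)
        (Z₁ Z₂ : Ω → Fin n → Bool),
        IsPMF p →
        UnifIID p Xv Yv →
        condMutInfo p M₁ (fun ω => (Yv ω, M₂ ω)) Xv = 0 →
        condMutInfo p M₂ (fun ω => (Xv ω, M₁ ω)) Yv = 0 →
        (∃ φ₁ : (Fin n → Bool) × 𝓜₁ × 𝓜₂ → Fin n → Bool,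
          ∀ ω, Z₁ ω = φ₁ (Xv ω, M₁ ω, M₂ ω)) →
        (∃ φ₂ : (Fin n → Bool × Bool) × 𝓜₁ × 𝓜₂ → Fin n → Bool,
          ∀ ω, Z₂ ω = φ₂ (Yv ω, M₁ ω, M₂ ω)) →
        ¬ (probOf p (fun ω => (Z₁ ω, Z₂ ω) ≠ (selSame Xv Yv ω, selSame Xv Yv ω)) ≤ ε₀ ∧
           mutInfo p (fun ω => (M₁ ω, M₂ ω)) (selOpp Xv Yv) ≤ n * ε₀) := by
  refine ⟨1 / 64, by norm_num, ?_⟩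
  rintro n hn Ω 𝓜₁ 𝓜₂ _ _ _ _ _ p Xv Yv M₁ M₂ Z₁ Z₂ hp hXY hM₁ hM₂ hZ₁ hZ₂ ⟨herr, hleak⟩
  have hbits : ∀ Z : Ω → Fin n → Bool,
      (∀ ω, Z ω ≠ selSame Xv Yv ω → (Z₁ ω, Z₂ ω) ≠ (selSame Xv Yv ω, selSame Xv Yv ω)) →
      ∑ i, probOf p (fun ω ↦ Z ω i ≠ selSame Xv Yv ω i) ≤ n * (1 / 64) := fun Z hZ ↦
    (sum_probOf_apply_ne_le hp.1 hZ).trans (by rw [Fintype.card_fin]; gcongr)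
  have hbound := interaction_necessary_general hp hXY hM₁ hM₂ hZ₁ hZ₂ (by norm_num) (by norm_num)
    (hbits Z₁ (by grind)) (hbits Z₂ (by grind))
  rw [show (8 : ℝ) * (1 / 64) = 1 / 8 by norm_num] at hbound
  have hn' : (0 : ℝ) < n := by exact_mod_cast hn
  exact (mul_lt_mul_of_pos_left one_div_64_lt_log_two_sub_binEntropy hn').not_ge
    (hbound.trans hleak)
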